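/- arXiv:2508.18857 — 3 statements merged into one kernel-verified Lean document; each statement's English description precedes it below -/
import Mathlib

section
/- Every good sequence occurs as a row of the cumulative distance-count matrix of some finite simple graph: for every good sequence (a_0, a_1, …, a_{n−1}), there exist a simple graph G on n vertices and a vertex v of G such that m_p(v) = a_p for all p = 0, 1, …, n−1. -/
/-- `mCount G k v` is the number of vertices `w` that are connected to `v` and whose
shortest-path distance to `v` is at most `k`. -/
noncomputable def mCount {V : Type*} [Fintype V] (G : SimpleGraph V) (k : ℕ) (v : V) : ℕ :=
  {w | G.Reachable w v ∧ G.dist w v ≤ k}.ncard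

/-- The caterpillar on `Fin n` in which every vertex of the layer `[b i, b (i + 1))` is joined
to the last vertex `b i - 1` of the preceding layer. -/
def layeredCaterpillar (n : ℕ) (b : ℕ → ℕ) : SimpleGraph (Fin n) :=
  SimpleGraph.fromRel fun u w => ∃ i, (u : ℕ) + 1 = b i ∧ b i ≤ w ∧ (w : ℕ) < b (i + 1)

namespace layeredCaterpillar

variable {n : ℕ} {b : ℕ → ℕ}

theorem exists_walk_of_lt (hb0 : b 0 = 1) (hb : Monotone b) (v : Fin n) (hv : (v : ℕ) = 0) (p : ℕ)
    (w : Fin n) (hw : (w : ℕ) < b p) :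
    ∃ q : (layeredCaterpillar n b).Walk w v, q.length ≤ p := by
  induction p generalizing w with
  | zero =>
    obtain rfl : w = v := Fin.ext (by omega)
    exact ⟨.nil, le_rfl⟩
  | succ p ih =>
    by_cases h : (w : ℕ) < b p
    · obtain ⟨q, hq⟩ := ih w h
      exact ⟨q, by omega⟩
    · have hp : 1 ≤ b p := hb0 ▸ hb p.zero_le
      obtain ⟨q, hq⟩ := ih ⟨b p - 1, by omega⟩ (by simp only; omega)
      have hadj : (layeredCaterpillar n b).Adj w ⟨b p - 1, by omega⟩ := by
        rw [layeredCaterpillar, SimpleGraph.fromRel_adj]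
        refine ⟨fun he => ?_, Or.inr ⟨p, by simp only; omega, by omega, hw⟩⟩
        have := congrArg Fin.val he
        simp only at this
        omega
      exact ⟨.cons hadj q, by simpa using hq⟩

theorem lt_of_walk (hb0 : b 0 = 1) (hb : Monotone b)
    (hstrict : ∀ p i, p < i → b i < b (i + 1) → b p < b i) (v : Fin n) (hv : (v : ℕ) = 0)
    {w : Fin n} (q : (layeredCaterpillar n b).Walk w v) : (w : ℕ) < b q.length := by
  induction q with
  | nil => simp [hv, hb0]
  | @cons u x _ hadj q ih =>
    have hx := ih hv
    have hmono := hb (Nat.le_succ q.length)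
    rw [SimpleGraph.Walk.length_cons]
    rw [layeredCaterpillar, SimpleGraph.fromRel_adj] at hadj
    obtain ⟨-, ⟨i, h1, h2, h3⟩ | ⟨i, h1, h2, h3⟩⟩ := hadj
    · simp only [Nat.succ_eq_add_one] at hmono
      omega
    · have hi : i ≤ q.length := by
        by_contra! hlt
        have := hstrict _ i hlt (by omega)
        omega
      exact h3.trans_le (hb (by omega))

theorem mCount_eq (hb0 : b 0 = 1) (hb : Monotone b)
    (hstrict : ∀ p i, p < i → b i < b (i + 1) → b p < b i) (v : Fin n) (hv : (v : ℕ) = 0)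
    (p : ℕ) (hp : b p ≤ n) : mCount (layeredCaterpillar n b) p v = b p := by
  have hset : {w | (layeredCaterpillar n b).Reachable w v ∧
      (layeredCaterpillar n b).dist w v ≤ p} = {w : Fin n | (w : ℕ) < b p} := by
    ext w
    constructor
    · rintro ⟨hr, hd⟩
      obtain ⟨q, hq⟩ := hr.exists_walk_length_eq_dist
      exact (lt_of_walk hb0 hb hstrict v hv q).trans_le (hb (hq ▸ hd))
    · intro hw
      obtain ⟨q, hq⟩ := exists_walk_of_lt hb0 hb v hv p w hw
      exact ⟨q.reachable, (SimpleGraph.dist_le q).trans hq⟩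
  rw [mCount, hset, Set.ncard_eq_toFinset_card']
  simp [Fin.card_filter_val_lt, hp]

end layeredCaterpillar

/-- Every good sequence `(a_0, …, a_{n-1})` (a sequence of positive integers with
`a_0 = 1` which is strictly increasing up to some index `j` where it reaches a value
`k ≤ n`, and is constantly `k` afterwards) occurs as a row of the cumulative
distance-count matrix of some finite simple graph on `n` vertices: there are a simple
graph `G` on `n` vertices and a vertex `v` with `m_p(v) = a_p` for all `p < n`. -/
theorem good_sequence_is_CDCM_row (n : ℕ) (hn : 1 ≤ n) (a : ℕ → ℕ)
    (hpos : ∀ i, i ≤ n - 1 → 1 ≤ a i) (h0 : a 0 = 1)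
    (hgood : ∃ j k, k ≤ n ∧ j ≤ n - 1 ∧ (∀ i, i < j → a i < a (i + 1)) ∧
      a j = k ∧ ∀ r, j ≤ r → r ≤ n - 1 → a r = k) :
    ∃ (G : SimpleGraph (Fin n)) (v : Fin n), ∀ p, p ≤ n - 1 → mCount G p v = a p := by
  obtain ⟨j, k, hk, -, hlt, hj, hconst⟩ := hgood
  set b : ℕ → ℕ := fun p => a (min p j) with hbdef
  have hb_lt (i : ℕ) (hi : i < j) : b i < b (i + 1) := by
    simpa [hbdef, min_eq_left hi.le, min_eq_left (Nat.succ_le_of_lt hi)] using hlt i hi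
  have hb_ge (i : ℕ) (hi : j ≤ i) : b i = k := by simp [hbdef, hi, hj]
  have hb : Monotone b := monotone_nat_of_le_succ fun i => by
    rcases lt_or_ge i j with hi | hi
    · exact (hb_lt i hi).le
    · rw [hb_ge i hi, hb_ge (i + 1) (by omega)]
  have hstrict (p i : ℕ) (hpi : p < i) (h : b i < b (i + 1)) : b p < b i := by
    have hi : i < j := by
      by_contra! hi
      rw [hb_ge i hi, hb_ge (i + 1) (by omega)] at h
      exact h.false
    exact (hb_lt p (hpi.trans hi)).trans_le (hb hpi)
  refine ⟨layeredCaterpillar n b, ⟨0, hn⟩, fun p hp => ?_⟩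
  have hbn : b p ≤ n :=
    (hb (le_max_left p j)).trans ((hb_ge _ (le_max_right p j)).le.trans hk)
  rw [layeredCaterpillar.mCount_eq (by simp [hbdef, h0]) hb hstrict _ rfl p hbn]
  rcases lt_or_ge p j with h | h
  · simp [hbdef, min_eq_left h.le]
  · rw [hb_ge p h, hconst p h hp]
end

section
/- Let m ≥ 1 and let a_1, …, a_{3m} be natural numbers with a_i ≥ 1 for all i and Σ_{i=1}^{3m} a_i = m·t. If there exists a three-partition of {1,…,3m} into m disjoint triples each with sum t, then there exists a simple graph G on n = (t+4)·m vertices whose distance-count matrix equals M(a) up to permutation of rows; that is, the multiset of rows (n_0(v), n_1(v), …, n_{n−1}(v)) over all vertices v of G equals the multiset consisting of: the row (1, a_i, 1, t−a_i, 2, 0, …, 0) for each i = 1,…,3m; the row (1, 2, t−1, 2, 0, …, 0) with multiplicity s = m·t; and the row (1, t, 3, 0, …, 0) with multiplicity m. -/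
/-- A three-partition of the instance `a : Fin (3*m) → ℕ` with common sum `t`:
a partition of the index set into `m` pairwise disjoint sets `D_1, …, D_m`, each of
size `3`, such that the elements indexed by each `D_j` sum to `t`. -/
def HasThreePartition (m t : ℕ) (a : Fin (3 * m) → ℕ) : Prop :=
  ∃ D : Fin m → Finset (Fin (3 * m)),
    (∀ j j', j ≠ j' → Disjoint (D j) (D j')) ∧
    (⋃ j, (D j : Set (Fin (3 * m)))) = Set.univ ∧
    (∀ j, (D j).card = 3) ∧
    (∀ j, ∑ i ∈ D j, a i = t)

/-- `nCount G k v` is the number of vertices `w` that are connected to `v` and whose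
shortest-path distance to `v` is exactly `k`. -/
noncomputable def nCount {V : Type*} [Fintype V] (G : SimpleGraph V) (k : ℕ) (v : V) : ℕ :=
  {w | G.Reachable w v ∧ G.dist w v = k}.ncard

/-- The multiset of rows of the distance-count matrix of a graph `G` on `n` vertices:
the row of vertex `v` has `k`-th entry `n_k(v)`, for `k = 0, …, n-1`. -/
noncomputable def dcmRows {V : Type*} [Fintype V] (G : SimpleGraph V) (n : ℕ) :
    Multiset (Fin n → ℕ) :=
  Multiset.map (fun v => fun k : Fin n => nCount G (k : ℕ) v) Finset.univ.val

/-- The row `(1, aᵢ, 1, t - aᵢ, 2, 0, …, 0)` of length `n`. -/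
def rowI (n t ai : ℕ) : Fin n → ℕ := fun k =>
  if (k : ℕ) = 0 then 1 else if (k : ℕ) = 1 then ai else if (k : ℕ) = 2 then 1
  else if (k : ℕ) = 3 then t - ai else if (k : ℕ) = 4 then 2 else 0

/-- The row `(1, 2, t - 1, 2, 0, …, 0)` of length `n`. -/
def rowII (n t : ℕ) : Fin n → ℕ := fun k =>
  if (k : ℕ) = 0 then 1 else if (k : ℕ) = 1 then 2 else if (k : ℕ) = 2 then t - 1
  else if (k : ℕ) = 3 then 2 else 0

/-- The row `(1, t, 3, 0, …, 0)` of length `n`. -/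
def rowIII (n t : ℕ) : Fin n → ℕ := fun k =>
  if (k : ℕ) = 0 then 1 else if (k : ℕ) = 1 then t else if (k : ℕ) = 2 then 3 else 0

/-- The multiset of rows of the matrix `M(a)`: the row `(1, aᵢ, 1, t - aᵢ, 2, 0, …, 0)`
for each `i = 1, …, 3m`, the row `(1, 2, t - 1, 2, 0, …, 0)` with multiplicity
`s = m·t`, and the row `(1, t, 3, 0, …, 0)` with multiplicity `m`. -/
def targetRows (m t : ℕ) (a : Fin (3 * m) → ℕ) :
    Multiset (Fin (4 * m + m * t) → ℕ) :=
  Multiset.map (fun i => rowI (4 * m + m * t) t (a i)) Finset.univ.val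
    + Multiset.replicate (m * t) (rowII (4 * m + m * t) t)
    + Multiset.replicate m (rowIII (4 * m + m * t) t)

/-- Breadth-first layering: a function `f` that vanishes only at `v`, is 1-Lipschitz along edges,
and drops by one along some edge inside the block of `v`, is the distance to `v`. -/
theorem SimpleGraph.reachable_and_dist_eq_iff {V β : Type*} (G : SimpleGraph V) (blk : V → β)
    (hblk : ∀ x y, G.Adj x y → blk x = blk y) (v : V) (f : V → ℕ) (hv : f v = 0)
    (hlip : ∀ x y, G.Adj x y → f x ≤ f y + 1)
    (hdrop : ∀ x, blk x = blk v → x ≠ v → ∃ y, G.Adj x y ∧ f x = f y + 1) (w : V) (k : ℕ) :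
    (G.Reachable w v ∧ G.dist w v = k) ↔ (blk w = blk v ∧ f w = k) := by
  have hwalk : ∀ {x y : V} (p : G.Walk x y), blk x = blk y ∧ f x ≤ f y + p.length := by
    intro x y p
    induction p with
    | nil => simp
    | cons h p ih =>
      refine ⟨(hblk _ _ h).trans ih.1, ?_⟩
      have := hlip _ _ h
      rw [SimpleGraph.Walk.length_cons]
      omega
  have hex : ∀ n x, f x = n → blk x = blk v → ∃ p : G.Walk x v, p.length = n := by
    intro n
    induction n with
    | zero =>
      intro x hx hb
      by_cases hxv : x = v
      · subst hxv
        exact ⟨.nil, rfl⟩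
      · obtain ⟨y, -, h⟩ := hdrop x hb hxv
        omega
    | succ n ih =>
      intro x hx hb
      have hxv : x ≠ v := by
        rintro rfl
        omega
      obtain ⟨y, hy, h⟩ := hdrop x hb hxv
      obtain ⟨p, hp⟩ := ih y (by omega) ((hblk _ _ hy).symm.trans hb)
      exact ⟨.cons hy p, by simp [hp]⟩
  have hdist : blk w = blk v → G.Reachable w v ∧ G.dist w v = f w := by
    intro hb
    obtain ⟨p, hp⟩ := hex _ w rfl hb
    refine ⟨⟨p⟩, le_antisymm (hp ▸ SimpleGraph.dist_le p) ?_⟩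
    obtain ⟨q, hq⟩ := SimpleGraph.Reachable.exists_walk_length_eq_dist ⟨p⟩
    have := (hwalk q).2
    omega
  constructor
  · rintro ⟨⟨p⟩, hk⟩
    have hb := (hwalk p).1
    exact ⟨hb, (hdist hb).2.symm.trans hk⟩
  · rintro ⟨hb, hk⟩
    exact ⟨(hdist hb).1, (hdist hb).2.trans hk⟩

theorem SimpleGraph.Reachable.dist_map_le {V W : Type*} {G : SimpleGraph V} {H : SimpleGraph W}
    (e : G →g H) {u v : V} (h : G.Reachable u v) : H.dist (e u) (e v) ≤ G.dist u v := by
  obtain ⟨p, hp⟩ := h.exists_walk_length_eq_dist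
  rw [← hp, ← SimpleGraph.Walk.length_map e p]
  exact SimpleGraph.dist_le _

theorem SimpleGraph.Iso.dist_eq {V W : Type*} {G : SimpleGraph V} {H : SimpleGraph W}
    (e : G ≃g H) (u v : V) : H.dist (e u) (e v) = G.dist u v := by
  by_cases h : G.Reachable u v
  · refine le_antisymm (h.dist_map_le e.toHom) ?_
    simpa using (h.map e.toHom).dist_map_le e.symm.toHom
  · rw [SimpleGraph.dist_eq_zero_of_not_reachable h,
      SimpleGraph.dist_eq_zero_of_not_reachable (by rwa [SimpleGraph.Iso.reachable_iff])]

theorem nCount_iso {V W : Type*} [Fintype V] [Fintype W] {G : SimpleGraph V} {H : SimpleGraph W}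
    (e : G ≃g H) (k : ℕ) (v : V) : nCount H k (e v) = nCount G k v := by
  unfold nCount
  rw [← Set.ncard_image_of_injective _ e.injective]
  congr 1
  ext w
  obtain ⟨w, rfl⟩ := e.surjective w
  simp [SimpleGraph.Iso.reachable_iff, SimpleGraph.Iso.dist_eq]

theorem dcmRows_iso {V W : Type*} [Fintype V] [Fintype W] {G : SimpleGraph V}
    {H : SimpleGraph W} (e : G ≃g H) (n : ℕ) : dcmRows H n = dcmRows G n := by
  unfold dcmRows
  rw [← Finset.map_univ_equiv e.toEquiv, Finset.map_val, Multiset.map_map]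
  refine Multiset.map_congr rfl fun v _ => funext fun k => nCount_iso e k v

/-- The vertices realizing a partition into blocks: one per index, `a i` private leaves for
each index `i`, and one hub per block. -/
abbrev BlockVertex {ι : Type*} (κ : Type*) (a : ι → ℕ) : Type _ :=
  ι ⊕ (Σ i, Fin (a i)) ⊕ κ

/-- Each leaf is joined to its index and to the hub of the block of its index. -/
def blockAdj {ι κ : Type*} (a : ι → ℕ) (b : ι → κ) : BlockVertex κ a → BlockVertex κ a → Prop
  | .inl i, .inr (.inl p) => p.1 = i
  | .inr (.inl p), .inl i => p.1 = i
  | .inr (.inl p), .inr (.inr j) => b p.1 = j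
  | .inr (.inr j), .inr (.inl p) => b p.1 = j
  | _, _ => False

def blockGraph {ι κ : Type*} (a : ι → ℕ) (b : ι → κ) : SimpleGraph (BlockVertex κ a) where
  Adj := blockAdj a b
  symm := ⟨by rintro (i | p | j) (i' | p' | j') h <;> simp_all [blockAdj]⟩
  loopless := ⟨by rintro (i | p | j) h <;> simp [blockAdj] at h⟩

/-- The block containing a vertex. -/
def blockOf {ι κ : Type*} (a : ι → ℕ) (b : ι → κ) : BlockVertex κ a → κ
  | .inl i => b i
  | .inr (.inl p) => b p.1
  | .inr (.inr j) => j

theorem blockOf_eq_of_adj {ι κ : Type*} {a : ι → ℕ} {b : ι → κ} (x y : BlockVertex κ a)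
    (h : (blockGraph a b).Adj x y) : blockOf a b x = blockOf a b y := by
  rcases x with i | p | j <;> rcases y with i' | p' | j' <;>
    simp [blockGraph, blockAdj] at h <;> simp [blockOf, h]

section Count

variable {ι κ : Type*} [Fintype ι] [Fintype κ] [DecidableEq κ]
  {a : ι → ℕ} {b : ι → κ}

theorem sum_ite_eq_at {α : Type*} [DecidableEq α] (s : Finset α) (c : α → ℕ) {p : α} (hp : p ∈ s)
    (u w k : ℕ) :
    ∑ q ∈ s, (if (if q = p then u else w) = k then c q else 0) =
      (if u = k then c p else 0) + (if w = k then (∑ q ∈ s, c q) - c p else 0) := by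
  rw [← Finset.add_sum_erase s _ hp, if_pos rfl]
  congr 1
  have h : ∀ q ∈ s.erase p, (if (if q = p then u else w) = k then c q else 0) =
      if w = k then c q else 0 := by
    intro q hq
    rw [if_neg (Finset.ne_of_mem_erase hq)]
  rw [Finset.sum_congr rfl h, ← Finset.add_sum_erase s c hp]
  split_ifs <;> simp

theorem nCount_blockGraph_eq_sum (v : BlockVertex κ a) (j : κ) (hj : blockOf a b v = j)
    (f : ι → ℕ) (g : (Σ i, Fin (a i)) → ℕ) (h : ℕ)
    (hv : Sum.elim f (Sum.elim g fun _ => h) v = 0)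
    (hlip : ∀ x y, (blockGraph a b).Adj x y →
      Sum.elim f (Sum.elim g fun _ => h) x ≤ Sum.elim f (Sum.elim g fun _ => h) y + 1)
    (hdrop : ∀ x, blockOf a b x = j → x ≠ v → ∃ y, (blockGraph a b).Adj x y ∧
      Sum.elim f (Sum.elim g fun _ => h) x = Sum.elim f (Sum.elim g fun _ => h) y + 1) (k : ℕ) :
    nCount (blockGraph a b) k v =
      (∑ i with b i = j, if f i = k then 1 else 0) +
      ((∑ p ∈ (Finset.univ.filter (b · = j)).sigma (fun _ => Finset.univ),
          if g p = k then 1 else 0) +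
        if h = k then 1 else 0) := by
  subst hj
  have hset : {w | (blockGraph a b).Reachable w v ∧ (blockGraph a b).dist w v = k} =
      ((Finset.univ.filter fun w => blockOf a b w = blockOf a b v ∧
        Sum.elim f (Sum.elim g fun _ => h) w = k :
        Finset (BlockVertex κ a)) : Set (BlockVertex κ a)) := by
    ext w
    simpa using SimpleGraph.reachable_and_dist_eq_iff _ (blockOf a b) blockOf_eq_of_adj v _ hv
      hlip hdrop w k
  rw [nCount, hset, Set.ncard_coe_finset, Finset.card_filter, Fintype.sum_sum_type,
    Fintype.sum_sum_type]
  generalize blockOf a b v = j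
  simp only [ite_and, Finset.sum_filter, Finset.sum_sigma, Fintype.sum_sigma]
  change (∑ i, if b i = j then if f i = k then 1 else 0 else 0) +
    ((∑ i, ∑ x, if b i = j then if g ⟨i, x⟩ = k then 1 else 0 else 0) +
      ∑ j', if j' = j then if h = k then 1 else 0 else 0) = _
  rw [Finset.sum_ite_eq', if_pos (Finset.mem_univ j)]
  refine congrArg₂ _ rfl (congrArg₂ _ (Finset.sum_congr rfl fun i _ => ?_) rfl)
  split_ifs <;> simp

theorem nCount_index [DecidableEq ι] (t : ℕ) (i : ι) (ha : ∀ i, 1 ≤ a i)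
    (hcard : ∀ j, (Finset.univ.filter (b · = j)).card = 3)
    (hsum : ∀ j, ∑ i with b i = j, a i = t) (n : ℕ) (k : Fin n) :
    nCount (blockGraph a b) k (.inl i) = rowI n t (a i) k := by
  rw [nCount_blockGraph_eq_sum (.inl i) (b i) rfl
    (fun j => if j = i then 0 else 4) (fun p => if p.1 = i then 1 else 3) 2 (by simp)]
  · have hi : i ∈ Finset.univ.filter (b · = b i) := by simp
    have hidx := sum_ite_eq_at _ (fun _ => 1) hi 0 4 k
    have hleaf := sum_ite_eq_at _ a hi 1 3 k
    simp only [Finset.sum_const, hcard, hsum] at hidx hleaf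
    have hfiber : ∀ q ∈ Finset.univ.filter (b · = b i),
        (∑ _x : Fin (a q), if (if q = i then 1 else 3) = (k : ℕ) then 1 else 0) =
          if (if q = i then 1 else 3) = (k : ℕ) then a q else 0 := by
      intro q _
      simp
    rw [hidx, Finset.sum_sigma, Finset.sum_congr rfl hfiber, hleaf]
    simp only [rowI]
    generalize (k : ℕ) = l
    rcases l with _ | _ | _ | _ | _ | l <;> simp
  · rintro (j | p | j) (j' | p' | j') h <;> simp [blockGraph, blockAdj] at h <;>
      simp [h] <;> split_ifs <;> omega
  · rintro (j | p | j) hb hne <;> simp [blockOf] at hb hne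
    · exact ⟨.inr (.inl ⟨j, 0, ha j⟩), by simp [blockGraph, blockAdj], by simp [hne]⟩
    · by_cases hp : p.1 = i
      · exact ⟨.inl i, by simp [blockGraph, blockAdj, hp], by simp [hp]⟩
      · exact ⟨.inr (.inr (b p.1)), by simp [blockGraph, blockAdj], by simp [hp]⟩
    · exact ⟨.inr (.inl ⟨i, 0, ha i⟩), by simp [blockGraph, blockAdj, hb], by simp⟩

theorem nCount_leaf [DecidableEq ι] (t : ℕ) (p : Σ i, Fin (a i)) (ha : ∀ i, 1 ≤ a i)
    (hcard : ∀ j, (Finset.univ.filter (b · = j)).card = 3)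
    (hsum : ∀ j, ∑ i with b i = j, a i = t) (n : ℕ) (k : Fin n) :
    nCount (blockGraph a b) k (.inr (.inl p)) = rowII n t k := by
  rw [nCount_blockGraph_eq_sum (.inr (.inl p)) (b p.1) rfl
    (fun j => if j = p.1 then 1 else 3) (fun q => if q = p then 0 else 2) 1 (by simp)]
  · have hi : p.1 ∈ Finset.univ.filter (b · = b p.1) := by simp
    have hp : p ∈ (Finset.univ.filter (b · = b p.1)).sigma
        (fun i => (Finset.univ : Finset (Fin (a i)))) := by simp
    have hidx := sum_ite_eq_at _ (fun _ => 1) hi 1 3 k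
    have hleaf := sum_ite_eq_at _ (fun _ => 1) hp 0 2 k
    simp only [← Finset.card_eq_sum_ones, Finset.card_sigma, Finset.card_univ, Fintype.card_fin,
      hcard, hsum] at hidx hleaf
    rw [hidx, hleaf]
    simp only [rowII]
    generalize (k : ℕ) = l
    rcases l with _ | _ | _ | _ | l <;> simp
  · rintro (j | q | j) (j' | q' | j') h <;> simp [blockGraph, blockAdj] at h <;>
      simp <;> split_ifs <;> simp_all
  · rintro (j | q | j) hb hne <;> simp [blockOf] at hb hne
    · by_cases hj : j = p.1
      · exact ⟨.inr (.inl p), by simp [blockGraph, blockAdj, hj], by simp [hj]⟩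
      · refine ⟨.inr (.inl ⟨j, 0, ha j⟩), by simp [blockGraph, blockAdj], ?_⟩
        have : (⟨j, 0, ha j⟩ : Σ i, Fin (a i)) ≠ p := fun h => hj (congrArg Sigma.fst h)
        simp [hj, this]
    · exact ⟨.inr (.inr (b q.1)), by simp [blockGraph, blockAdj], by simp [hne]⟩
    · exact ⟨.inr (.inl p), by simp [blockGraph, blockAdj, hb], by simp⟩

theorem nCount_hub (t : ℕ) (j : κ) (ha : ∀ i, 1 ≤ a i)
    (hcard : ∀ j, (Finset.univ.filter (b · = j)).card = 3)
    (hsum : ∀ j, ∑ i with b i = j, a i = t) (n : ℕ) (k : Fin n) :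
    nCount (blockGraph a b) k (.inr (.inr j)) = rowIII n t k := by
  rw [nCount_blockGraph_eq_sum (.inr (.inr j)) j rfl
    (fun _ => 2) (fun _ => 1) 0 (by simp)]
  · simp only [Finset.sum_const, Finset.card_sigma,
      Finset.card_univ, Fintype.card_fin, hcard, hsum, smul_eq_mul]
    simp only [rowIII]
    generalize (k : ℕ) = l
    rcases l with _ | _ | _ | l <;> simp
  · rintro (j | q | j) (j' | q' | j') h <;> simp [blockGraph, blockAdj] at h <;> simp
  · rintro (i | q | j) hb hne <;> simp [blockOf] at hb hne
    · exact ⟨.inr (.inl ⟨i, 0, ha i⟩), by simp [blockGraph, blockAdj], by simp⟩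
    · exact ⟨.inr (.inr (b q.1)), by simp [blockGraph, blockAdj], by simp⟩
    · exact absurd hb hne

end Count

theorem dcmRows_blockGraph (m t : ℕ) (a : Fin (3 * m) → ℕ) (b : Fin (3 * m) → Fin m)
    (ha : ∀ i, 1 ≤ a i) (htotal : ∑ i, a i = m * t)
    (hcard : ∀ j, (Finset.univ.filter (b · = j)).card = 3)
    (hsum : ∀ j, ∑ i with b i = j, a i = t) :
    dcmRows (blockGraph a b) (4 * m + m * t) = targetRows m t a := by
  have hidx : ∀ i, (fun k : Fin (4 * m + m * t) => nCount (blockGraph a b) k (.inl i)) =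
      rowI (4 * m + m * t) t (a i) := fun i => funext (nCount_index t i ha hcard hsum _)
  have hleaf : ∀ p, (fun k : Fin (4 * m + m * t) => nCount (blockGraph a b) k (.inr (.inl p))) =
      rowII (4 * m + m * t) t := fun p => funext (nCount_leaf t p ha hcard hsum _)
  have hhub : ∀ j, (fun k : Fin (4 * m + m * t) => nCount (blockGraph a b) k (.inr (.inr j))) =
      rowIII (4 * m + m * t) t := fun j => funext (nCount_hub t j ha hcard hsum _)
  unfold dcmRows targetRows
  rw [← Finset.univ_disjSum_univ, ← Finset.univ_disjSum_univ]
  simp only [Finset.val_disjSum, Multiset.disjSum, Multiset.map_add, Multiset.map_map,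
    Function.comp_def, hidx, hleaf, hhub, Multiset.map_const', Finset.card_val,
    Finset.card_univ, Fintype.card_sigma, Fintype.card_fin, htotal, add_assoc]

/-- Let `m ≥ 1` and `a_1, …, a_{3m}` be natural numbers with `a_i ≥ 1` and
`Σ a_i = m·t`. If the instance admits a three-partition, then there is a simple graph
on `n = 4m + m·t = (t+4)·m` vertices whose distance-count matrix equals `M(a)` up to
permutation of rows, i.e. whose multiset of rows is the prescribed one. -/
theorem DCM_of_threePartition (m t : ℕ) (hm : 1 ≤ m) (a : Fin (3 * m) → ℕ)
    (hpos : ∀ i, 1 ≤ a i) (hsum : ∑ i, a i = m * t)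
    (hpart : HasThreePartition m t a) :
    ∃ G : SimpleGraph (Fin (4 * m + m * t)),
      dcmRows G (4 * m + m * t) = targetRows m t a := by
  obtain ⟨D, hdisj, hcover, hcard, hDsum⟩ := hpart
  have hex : ∀ i, ∃ j, i ∈ D j := fun i => by
    have hi : i ∈ ⋃ j, (D j : Set (Fin (3 * m))) := hcover ▸ Set.mem_univ i
    simpa using hi
  choose b hb using hex
  have hD : ∀ j, Finset.univ.filter (b · = j) = D j := by
    intro j
    ext i
    simp only [Finset.mem_filter, Finset.mem_univ, true_and]
    refine ⟨fun h => h ▸ hb i, fun h => ?_⟩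
    by_contra hne
    exact Finset.disjoint_left.mp (hdisj _ _ hne) (hb i) h
  have hV : Fintype.card (BlockVertex (Fin m) a) = 4 * m + m * t := by
    simp [hsum]
    ring
  let e := Fintype.equivFinOfCardEq hV
  refine ⟨(blockGraph a b).map e, ?_⟩
  rw [dcmRows_iso (SimpleGraph.Iso.map e (blockGraph a b))]
  exact dcmRows_blockGraph m t a b hpos hsum (fun j => by rw [hD, hcard])
    (fun j => by rw [hD, hDsum])
end

section
/- Let m ≥ 1 and let a_1 ≥ a_2 ≥ ⋯ ≥ a_{3m} be natural numbers with Σ_{i=1}^{3m} a_i = m·t, t ≥ 4, 4·a_i > t and 2·a_i < t for all i, a_{3m} ≥ 3, and a_i − a_{i+1} ≥ 3 for all i = 1,…,3m−1. Set s = m·t and n = 4m + s = (t+4)m. Then the following are equivalent: (1) there exists a three-partition of {1,…,3m} into m disjoint triples each with sum t; (2) there exists a simple graph G on n vertices whose distance-count matrix equals M(a) up to permutation of rows, i.e., the multiset of rows (n_0(v), n_1(v), …, n_{n−1}(v)) over all vertices v of G equals the multiset consisting of the row (1, a_i, 1, t−a_i, 2, 0, …, 0) for each i = 1,…,3m, the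 row (1, 2, t−1, 2, 0, …, 0) with multiplicity s, and the row (1, t, 3, 0, …, 0) with multiplicity m. -/
theorem Fintype.exists_equiv_of_map_univ_eq {α β γ : Type*} [Fintype α] [Fintype β]
    (f : α → γ) (g : β → γ)
    (h : Multiset.map f Finset.univ.val = Multiset.map g Finset.univ.val) :
    ∃ e : α ≃ β, ∀ x, g (e x) = f x := by
  classical
  have hfib : ∀ c, Nonempty ({x // f x = c} ≃ {y // g y = c}) := by
    intro c
    have hc := congrArg (Multiset.count c) h
    rw [Multiset.count_map, Multiset.count_map] at hc
    refine Fintype.card_eq.mp ?_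
    rw [Fintype.card_subtype, Fintype.card_subtype]
    simpa [Finset.card_def, Finset.filter_val, eq_comm] using hc
  exact ⟨Equiv.ofFiberEquiv fun c => (hfib c).some, fun x => Equiv.ofFiberEquiv_map _ x⟩

/-- The rows of `M(a)`, indexed by the three kinds of vertices, where `K` indexes the vertices
of degree `2`. -/
def rowFamily (m t : ℕ) (a : Fin (3 * m) → ℕ) (K : Type*) :
    Fin (3 * m) ⊕ K ⊕ Fin m → Fin (4 * m + m * t) → ℕ :=
  Sum.elim (fun i => rowI _ t (a i)) (Sum.elim (fun _ => rowII _ t) fun _ => rowIII _ t)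

theorem map_rowFamily_univ (m t : ℕ) (a : Fin (3 * m) → ℕ) (K : Type*) [Fintype K]
    (hK : Fintype.card K = m * t) :
    Multiset.map (rowFamily m t a K) Finset.univ.val = targetRows m t a := by
  rw [← Finset.univ_disjSum_univ, ← Finset.univ_disjSum_univ]
  simp only [Finset.disjSum, Multiset.disjSum, Multiset.map_add, Multiset.map_map, targetRows,
    Function.comp_def, rowFamily, Sum.elim_inl, Sum.elim_inr, Multiset.map_const', add_assoc]
  simp [hK]

namespace SimpleGraph

variable {V W : Type*}

theorem Iso.dist_eq_s14 {G : SimpleGraph V} {H : SimpleGraph W} (φ : G ≃g H) (u v : V) :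
    H.dist (φ u) (φ v) = G.dist u v := by
  by_cases h : G.Reachable u v
  · have h' : H.Reachable (φ u) (φ v) := φ.reachable_iff.mpr h
    apply le_antisymm
    · obtain ⟨p, hp⟩ := h.exists_walk_length_eq_dist
      rw [← hp, ← Walk.length_map φ.toHom p]
      exact dist_le _
    · obtain ⟨p, hp⟩ := h'.exists_walk_length_eq_dist
      rw [← hp, ← Walk.length_map φ.symm.toHom p]
      have := dist_le (p.map φ.symm.toHom)
      simpa using this
  · have h' : ¬ H.Reachable (φ u) (φ v) := fun h' => h (φ.reachable_iff.mp h')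
    rw [dist_eq_zero_of_not_reachable h, dist_eq_zero_of_not_reachable h']

theorem Iso.nCount_eq [Fintype V] [Fintype W] {G : SimpleGraph V} {H : SimpleGraph W}
    (φ : G ≃g H) (k : ℕ) (v : V) : nCount H k (φ v) = nCount G k v := by
  unfold nCount
  rw [← Set.ncard_image_of_injective _ φ.injective]
  congr 1
  ext w
  obtain ⟨w, rfl⟩ := φ.surjective w
  simp [φ.dist_eq_s14, φ.reachable_iff]

/-- A vertex at distance `k + 1` from `v` has a neighbour at distance `k` from `v`. -/
theorem exists_adj_dist_eq {G : SimpleGraph V} {w v : V} {k : ℕ} (h : G.dist w v = k + 1) :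
    ∃ u, G.Adj w u ∧ G.Reachable u v ∧ G.dist u v = k := by
  have hr : G.Reachable w v := Reachable.of_dist_ne_zero (by omega)
  obtain ⟨p, hp⟩ := hr.exists_walk_length_eq_dist
  cases p with
  | nil => simp at h
  | @cons _ u _ hadj q =>
    refine ⟨u, hadj, q.reachable, ?_⟩
    have h1 := dist_le q
    obtain ⟨r, hr⟩ := q.reachable.exists_walk_length_eq_dist
    have h2 := dist_le (Walk.cons hadj r)
    simp only [Walk.length_cons] at hp h2
    omega

/-- A function that behaves like breadth-first-search levels from `v` computes the distance
to `v`. -/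
theorem reachable_and_dist_eq_iff_level {G : SimpleGraph V} (v : V) (l : V → Option ℕ)
    (hzero : ∀ w, l w = some 0 ↔ w = v)
    (hstep : ∀ u w k, G.Adj u w → l u = some k → ∃ k' ≤ k + 1, l w = some k')
    (hback : ∀ w k, l w = some (k + 1) → ∃ u, G.Adj w u ∧ l u = some k) (k : ℕ) (w : V) :
    G.Reachable w v ∧ G.dist w v = k ↔ l w = some k := by
  have hwalk : ∀ k w, l w = some k → ∃ p : G.Walk w v, p.length = k := by
    intro k
    induction k with
    | zero =>
      intro w hw
      obtain rfl := (hzero w).mp hw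
      exact ⟨Walk.nil, rfl⟩
    | succ k ih =>
      intro w hw
      obtain ⟨u, hadj, hu⟩ := hback w k hw
      obtain ⟨p, hp⟩ := ih u hu
      exact ⟨Walk.cons hadj p, by simp [hp]⟩
  have hlevel : ∀ w v' (p : G.Walk w v'), v' = v → ∃ k ≤ p.length, l w = some k := by
    intro w v' p
    induction p with
    | nil => exact fun h => ⟨0, le_rfl, (hzero _).mpr h⟩
    | cons hadj p ih =>
      intro h
      obtain ⟨k, hk, hl⟩ := ih h
      obtain ⟨k', hk', hl'⟩ := hstep _ _ k hadj.symm hl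
      exact ⟨k', by simp only [Walk.length_cons]; omega, hl'⟩
  constructor
  · rintro ⟨hr, rfl⟩
    obtain ⟨p, hp⟩ := hr.exists_walk_length_eq_dist
    obtain ⟨k, hk, hl⟩ := hlevel w v p rfl
    obtain ⟨q, hq⟩ := hwalk k w hl
    have := dist_le q
    rw [hl]
    congr 1
    omega
  · intro hw
    obtain ⟨p, hp⟩ := hwalk k w hw
    refine ⟨p.reachable, ?_⟩
    obtain ⟨q, hq⟩ := p.reachable.exists_walk_length_eq_dist
    obtain ⟨k', hk', hl⟩ := hlevel w v q rfl
    have := dist_le p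
    rw [hw, Option.some_inj] at hl
    omega

theorem nCount_eq_sum_level [Fintype V] {G : SimpleGraph V} (v : V) (l : V → Option ℕ)
    (hzero : ∀ w, l w = some 0 ↔ w = v)
    (hstep : ∀ u w k, G.Adj u w → l u = some k → ∃ k' ≤ k + 1, l w = some k')
    (hback : ∀ w k, l w = some (k + 1) → ∃ u, G.Adj w u ∧ l u = some k) (k : ℕ) :
    nCount G k v = ∑ w, if l w = some k then 1 else 0 := by
  classical
  unfold nCount
  simp_rw [reachable_and_dist_eq_iff_level v l hzero hstep hback]
  rw [Finset.sum_boole, Nat.cast_id, ← Set.ncard_coe_finset]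
  simp

end SimpleGraph

open Classical in
/-- The vertices at distance `k` from `v`. -/
noncomputable def distLayer {V : Type*} [Fintype V] (G : SimpleGraph V) (k : ℕ) (v : V) :
    Finset V :=
  Finset.univ.filter fun w => G.Reachable w v ∧ G.dist w v = k

theorem card_distLayer {V : Type*} [Fintype V] (G : SimpleGraph V) (k : ℕ) (v : V) :
    (distLayer G k v).card = nCount G k v := by
  rw [nCount, ← Set.ncard_coe_finset]
  simp [distLayer]

theorem mem_distLayer {V : Type*} [Fintype V] {G : SimpleGraph V} {k : ℕ} {v w : V} :
    w ∈ distLayer G k v ↔ G.Reachable w v ∧ G.dist w v = k := by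
  simp [distLayer]

theorem mem_distLayer_succ {V : Type*} [Fintype V] {G : SimpleGraph V} {k : ℕ} {v w : V} :
    w ∈ distLayer G (k + 1) v ↔ G.dist w v = k + 1 := by
  rw [mem_distLayer]
  exact ⟨fun h => h.2, fun h => ⟨.of_dist_ne_zero (by omega), h⟩⟩

theorem mem_distLayer_one {V : Type*} [Fintype V] {G : SimpleGraph V} {v w : V} :
    w ∈ distLayer G 1 v ↔ G.Adj w v := by
  rw [mem_distLayer_succ (k := 0), zero_add, SimpleGraph.dist_eq_one_iff_adj]

theorem hasThreePartition_of_fibers {m t : ℕ} {a : Fin (3 * m) → ℕ} (f : Fin (3 * m) → Fin m)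
    (hcard : ∀ j, (Finset.univ.filter (f · = j)).card = 3)
    (hsum : ∀ j, ∑ i with f i = j, a i = t) : HasThreePartition m t a := by
  refine ⟨fun j => Finset.univ.filter (f · = j), fun j j' hne => ?_, ?_, hcard, hsum⟩
  · rw [Finset.disjoint_filter]
    rintro i - rfl
    exact hne
  · ext i
    simp

theorem HasThreePartition.exists_fibers {m t : ℕ} {a : Fin (3 * m) → ℕ}
    (h : HasThreePartition m t a) :
    ∃ f : Fin (3 * m) → Fin m, (∀ j, (Finset.univ.filter (f · = j)).card = 3) ∧
      ∀ j, ∑ i with f i = j, a i = t := by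
  obtain ⟨D, hdisj, hcover, hcard, hsum⟩ := h
  have hmem : ∀ i, ∃ j, i ∈ D j := by
    intro i
    have : i ∈ ⋃ j, (D j : Set (Fin (3 * m))) := hcover ▸ Set.mem_univ i
    simpa using this
  choose f hf using hmem
  have hfib : ∀ j, Finset.univ.filter (f · = j) = D j := by
    intro j
    ext i
    simp only [Finset.mem_filter, Finset.mem_univ, true_and]
    constructor
    · rintro rfl
      exact hf i
    · intro hi
      by_contra hne
      exact Finset.disjoint_left.mp (hdisj _ _ hne) (hf i) hi
  exact ⟨f, fun j => by rw [hfib, hcard], fun j => by rw [hfib, hsum]⟩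

/-- Equality in `∑ i, x i ≤ card ι * c` forces equality in every term. -/
theorem eq_of_sum_eq_card_mul {ι : Type*} [Fintype ι] {x : ι → ℕ} {c : ℕ}
    (hle : ∀ i, x i ≤ c) (hsum : ∑ i, x i = Fintype.card ι * c) (i : ι) : x i = c := by
  have h : ∑ i, x i = ∑ _i : ι, c := by simp [hsum]
  exact (Finset.sum_eq_sum_iff_of_le fun i _ => hle i).mp h i (Finset.mem_univ i)

theorem hasThreePartition_of_nCount {V : Type*} [Fintype V] (G : SimpleGraph V) {m t : ℕ}
    {a : Fin (3 * m) → ℕ} (hsum : ∑ i, a i = m * t) (ht : 4 ≤ t) (hub : ∀ i, 2 * a i < t)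
    (p : Fin (3 * m) → V) (q : Fin m → V) (hp : Function.Injective p)
    (hp1 : ∀ i, nCount G 1 (p i) = a i) (hp2 : ∀ i, nCount G 2 (p i) = 1)
    (hp3 : ∀ i, nCount G 3 (p i) = t - a i)
    (hq1 : ∀ j, nCount G 1 (q j) = t) (hq2 : ∀ j, nCount G 2 (q j) = 3)
    (hdeg : ∀ v, t < 2 * nCount G 1 v → 2 < nCount G 1 v → ∃ j, v = q j) :
    HasThreePartition m t a := by
  classical
  have hcenter : ∀ i, ∃ j, distLayer G 2 (p i) = {q j} := by
    intro i
    obtain ⟨u, hu⟩ := Finset.card_eq_one.mp ((card_distLayer G 2 (p i)).trans (hp2 i))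
    have huadj : ∀ w, G.dist w (p i) = 3 → G.Adj w u := by
      intro w hw
      obtain ⟨u', hadj, hr, hd⟩ := SimpleGraph.exists_adj_dist_eq (k := 2) hw
      have : u' ∈ distLayer G 2 (p i) := mem_distLayer.mpr ⟨hr, hd⟩
      rw [hu, Finset.mem_singleton] at this
      exact this ▸ hadj
    have hud : G.dist u (p i) = 2 := by
      have : u ∈ distLayer G 2 (p i) := by simp [hu]
      exact (mem_distLayer.mp this).2
    obtain ⟨x, hux, -, hx⟩ := SimpleGraph.exists_adj_dist_eq (k := 1) hud
    have hsub : insert x (distLayer G 3 (p i)) ⊆ distLayer G 1 u := by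
      intro w hw
      rw [mem_distLayer_one]
      rcases Finset.mem_insert.mp hw with rfl | hw
      · exact hux.symm
      · exact huadj w (mem_distLayer.mp hw).2
    have hcard := Finset.card_le_card hsub
    rw [Finset.card_insert_of_notMem (fun h => by simpa [hx] using (mem_distLayer.mp h).2),
      card_distLayer, card_distLayer, hp3] at hcard
    have := hub i
    obtain ⟨j, rfl⟩ := hdeg u (by omega) (by omega)
    exact ⟨j, hu⟩
  choose f hf using hcenter
  have hdist : ∀ i, G.dist (q (f i)) (p i) = 2 := by
    intro i
    have : q (f i) ∈ distLayer G 2 (p i) := by simp [hf]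
    exact (mem_distLayer.mp this).2
  have hnbr : ∀ i, distLayer G 1 (p i) ⊆ distLayer G 1 (q (f i)) := by
    intro i
    have hsub : distLayer G 1 (q (f i)) ⊆ distLayer G 1 (p i) ∪ distLayer G 3 (p i) := by
      intro w hw
      rw [mem_distLayer_one] at hw
      have hne : G.dist w (p i) ≠ 2 := by
        intro h
        have : w ∈ distLayer G 2 (p i) := mem_distLayer_succ.mpr h
        rw [hf, Finset.mem_singleton] at this
        exact hw.ne this
      have hd := SimpleGraph.Adj.diff_dist_adj (u := p i) hw
      have h2 := hdist i
      rw [SimpleGraph.dist_comm] at h2 hne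
      rw [Finset.mem_union, mem_distLayer_succ (k := 0), mem_distLayer_succ (k := 2),
        SimpleGraph.dist_comm]
      omega
    have heq := Finset.eq_of_subset_of_card_le hsub <| by
      refine (Finset.card_union_le _ _).trans ?_
      rw [card_distLayer, card_distLayer, card_distLayer, hp1, hp3, hq1]
      have := hub i
      omega
    rw [heq]
    exact Finset.subset_union_left
  have hfib : ∀ j, (Finset.univ.filter (f · = j)).card ≤ 3 := by
    intro j
    refine le_of_le_of_eq ?_ ((card_distLayer G 2 (q j)).trans (hq2 j))
    refine Finset.card_le_card_of_injOn p (fun i hi => ?_) hp.injOn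
    obtain rfl : f i = j := by simpa using hi
    exact mem_distLayer_succ.mpr (SimpleGraph.dist_comm.trans (hdist i))
  have hfibsum : ∀ j, ∑ i with f i = j, a i ≤ t := by
    intro j
    rw [← hq1 j, ← card_distLayer]
    simp_rw [← hp1, ← card_distLayer]
    rw [← Finset.card_biUnion]
    · refine Finset.card_le_card (Finset.biUnion_subset.mpr fun i hi => ?_)
      obtain rfl : f i = j := by simpa using hi
      exact hnbr i
    · intro i hi i' hi' hne
      obtain rfl : f i = j := by simpa using hi
      have hii' : f i' = f i := by simpa using hi'
      have hd' := hdist i'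
      rw [hii'] at hd'
      refine Finset.disjoint_left.mpr fun w hw hw' => ?_
      have hwi := mem_distLayer_one.mp hw
      have hwi' := mem_distLayer_one.mp hw'
      have hnadj : ¬ G.Adj (p i') (p i) := by
        intro h
        have := hnbr i (mem_distLayer_one.mpr h)
        have := (mem_distLayer.mp this).2
        rw [SimpleGraph.dist_comm] at this
        omega
      have hr : G.Reachable (p i') (p i) := hwi'.symm.reachable.trans hwi.reachable
      have h1 := hr.one_lt_dist_of_ne_of_not_adj (fun h => hne (hp h).symm) hnadj
      have h2 := SimpleGraph.dist_le
        (SimpleGraph.Walk.cons hwi'.symm (SimpleGraph.Walk.cons hwi SimpleGraph.Walk.nil))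
      simp only [SimpleGraph.Walk.length_cons, SimpleGraph.Walk.length_nil] at h2
      have : p i' ∈ distLayer G 2 (p i) := mem_distLayer_succ.mpr (by omega)
      rw [hf, Finset.mem_singleton] at this
      rw [← this, SimpleGraph.dist_self] at hd'
      omega
  refine hasThreePartition_of_fibers f (eq_of_sum_eq_card_mul hfib ?_)
    (eq_of_sum_eq_card_mul hfibsum ?_)
  · rw [← Finset.card_eq_sum_card_fiberwise (s := Finset.univ) (by simp)]
    simp [mul_comm]
  · rw [Finset.sum_fiberwise, hsum, Fintype.card_fin]

/-- The disjoint union of trees: the centre `j` is joined to every middle vertex over a leaf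
index `i` with `f i = j`, and these middle vertices are joined to `i`. -/
def spiderForest {m : ℕ} {n : ℕ} (a : Fin n → ℕ) (f : Fin n → Fin m) :
    SimpleGraph (Fin n ⊕ (Σ i, Fin (a i)) ⊕ Fin m) :=
  SimpleGraph.fromRel fun u v => match u, v with
    | .inl i, .inr (.inl x) => x.1 = i
    | .inr (.inl x), .inr (.inr j) => f x.1 = j
    | _, _ => False

/-- Summing `g` over one level when `x` has level `b` and the remaining solutions of `P` have
level `c`. -/
theorem sum_level_of_two_levels {ι : Type*} [Fintype ι] [DecidableEq ι] (x : ι) (P : ι → Prop)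
    [DecidablePred P] (hx : P x) {b c : ℕ} (hbc : b ≠ c) (g : ι → ℕ) (k : ℕ) :
    (∑ y, if (if y = x then some b else if P y then some c else none) = some k then g y else 0) =
      if k = b then g x else if k = c then (∑ y with P y, g y) - g x else 0 := by
  split_ifs with hb hc
  · subst hb
    rw [Fintype.sum_eq_single x (fun y hy => by grind)]
    simp
  · subst hc
    have hsub : (∑ y with P y, g y) - g x = ∑ y ∈ (Finset.univ.filter P).erase x, g y := by
      rw [← Finset.add_sum_erase _ g (show x ∈ Finset.univ.filter P by simpa using hx)]
      omega
    rw [hsub, ← Finset.sum_filter]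
    refine Finset.sum_congr ?_ fun _ _ => rfl
    ext y
    simp
    grind
  · exact Finset.sum_eq_zero fun y _ => by grind

section spiderForest

variable {m n t : ℕ} {a : Fin n → ℕ} {f : Fin n → Fin m}

/-- Edges of the forest join a middle vertex to its leaf or to its centre. -/
theorem spiderForest_adj_iff (u v : Fin n ⊕ (Σ i, Fin (a i)) ⊕ Fin m) :
    (spiderForest a f).Adj u v ↔ ∃ x : Σ i, Fin (a i),
      (u = .inr (.inl x) ∧ (v = .inl x.1 ∨ v = .inr (.inr (f x.1)))) ∨
      (v = .inr (.inl x) ∧ (u = .inl x.1 ∨ u = .inr (.inr (f x.1)))) := by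
  rcases u with i | x | j <;> rcases v with i' | x' | j' <;>
    simp [spiderForest, eq_comm]

theorem nCount_spiderForest_inl (hpos : ∀ i, 0 < a i)
    (hcard : ∀ j, (Finset.univ.filter (f · = j)).card = 3)
    (hsum : ∀ j, ∑ i with f i = j, a i = t) (k : ℕ) (i : Fin n) :
    nCount (spiderForest a f) k (.inl i) =
      if k = 0 then 1 else if k = 1 then a i else if k = 2 then 1
      else if k = 3 then t - a i else if k = 4 then 2 else 0 := by
  rw [SimpleGraph.nCount_eq_sum_level (.inl i)
    (Sum.elim (fun i' => if i' = i then some 0 else if f i' = f i then some 4 else none)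
      (Sum.elim (fun x => if x.1 = i then some 1 else if f x.1 = f i then some 3 else none)
        fun j => if j = f i then some 2 else none))]
  · rw [Fintype.sum_sum_type, Fintype.sum_sum_type, Fintype.sum_sigma]
    have hinner : ∀ (c : Prop) [Decidable c] (l : ℕ),
        (∑ _y : Fin l, if c then 1 else 0) = if c then l else 0 := by
      intro c _ l
      split_ifs <;> simp
    have hcentre : (∑ j, if (if j = f i then some 2 else none) = some k then 1 else 0) =
        if k = 2 then 1 else 0 := by
      split_ifs with hk <;> simp [hk, eq_comm]
    have hleaf := sum_level_of_two_levels i (f · = f i) rfl (show 0 ≠ 4 by decide) (fun _ => 1) k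
    have hmid := (Finset.sum_congr rfl fun i' _ => hinner _ _).trans
      (sum_level_of_two_levels i (f · = f i) rfl (show 1 ≠ 3 by decide) a k)
    refine (congrArg₂ (· + ·) hleaf (congrArg₂ (· + ·) hmid hcentre)).trans ?_
    simp only [← Finset.card_eq_sum_ones, hcard, hsum]
    grind
  · rintro (i' | x | j) <;> grind
  · intro u w k hadj
    obtain ⟨x, ⟨rfl, rfl | rfl⟩ | ⟨rfl, rfl | rfl⟩⟩ := (spiderForest_adj_iff u w).mp hadj <;>
      simp <;> split_ifs <;> grind
  · rintro (i' | x | j) k hk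
    · refine ⟨.inr (.inl ⟨i', 0, hpos i'⟩), ?_⟩
      simp [spiderForest] at hk ⊢
      grind
    · by_cases hx : x.1 = i
      · refine ⟨.inl i, ?_⟩
        simp [spiderForest] at hk ⊢
        grind
      · refine ⟨.inr (.inr (f i)), ?_⟩
        simp [spiderForest] at hk ⊢
        grind
    · refine ⟨.inr (.inl ⟨i, 0, hpos i⟩), ?_⟩
      simp [spiderForest] at hk ⊢
      grind

theorem nCount_spiderForest_mid (hpos : ∀ i, 0 < a i)
    (hcard : ∀ j, (Finset.univ.filter (f · = j)).card = 3)
    (hsum : ∀ j, ∑ i with f i = j, a i = t) (k : ℕ) (x : Σ i, Fin (a i)) :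
    nCount (spiderForest a f) k (.inr (.inl x)) =
      if k = 0 then 1 else if k = 1 then 2 else if k = 2 then t - 1
      else if k = 3 then 2 else 0 := by
  rw [SimpleGraph.nCount_eq_sum_level (.inr (.inl x))
    (Sum.elim (fun i => if i = x.1 then some 1 else if f i = f x.1 then some 3 else none)
      (Sum.elim (fun y => if y = x then some 0 else if f y.1 = f x.1 then some 2 else none)
        fun j => if j = f x.1 then some 1 else none))]
  · rw [Fintype.sum_sum_type, Fintype.sum_sum_type]
    have hcentre : (∑ j, if (if j = f x.1 then some 1 else none) = some k then 1 else 0) =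
        if k = 1 then 1 else 0 := by
      split_ifs with hk <;> simp [hk, eq_comm]
    have htotal : (∑ y : (Σ i, Fin (a i)) with f y.1 = f x.1, 1) = t := by
      rw [← hsum (f x.1), Finset.sum_filter, Fintype.sum_sigma, Finset.sum_filter]
      refine Finset.sum_congr rfl fun i _ => ?_
      dsimp only
      split_ifs <;> simp
    have hleaf :=
      sum_level_of_two_levels x.1 (f · = f x.1) rfl (show 1 ≠ 3 by decide) (fun _ => 1) k
    have hmid :=
      sum_level_of_two_levels x (f ·.1 = f x.1) rfl (show 0 ≠ 2 by decide) (fun _ => 1) k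
    rw [htotal] at hmid
    refine (congrArg₂ (· + ·) hleaf (congrArg₂ (· + ·) hmid hcentre)).trans ?_
    simp only [← Finset.card_eq_sum_ones, hcard]
    grind
  · rintro (i' | y | j) <;> grind
  · intro u w k hadj
    obtain ⟨y, ⟨rfl, rfl | rfl⟩ | ⟨rfl, rfl | rfl⟩⟩ := (spiderForest_adj_iff u w).mp hadj <;>
      simp <;> split_ifs <;> grind
  · rintro (i' | y | j) k hk
    · by_cases hx : i' = x.1
      · refine ⟨.inr (.inl x), ?_⟩
        simp [spiderForest] at hk ⊢
        grind
      · refine ⟨.inr (.inl ⟨i', 0, hpos i'⟩), ?_⟩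
        simp [spiderForest] at hk ⊢
        grind
    · refine ⟨.inr (.inr (f x.1)), ?_⟩
      simp [spiderForest] at hk ⊢
      grind
    · refine ⟨.inr (.inl x), ?_⟩
      simp [spiderForest] at hk ⊢
      grind

theorem nCount_spiderForest_inr (hpos : ∀ i, 0 < a i)
    (hcard : ∀ j, (Finset.univ.filter (f · = j)).card = 3)
    (hsum : ∀ j, ∑ i with f i = j, a i = t) (k : ℕ) (j : Fin m) :
    nCount (spiderForest a f) k (.inr (.inr j)) =
      if k = 0 then 1 else if k = 1 then t else if k = 2 then 3 else 0 := by
  rw [SimpleGraph.nCount_eq_sum_level (.inr (.inr j))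
    (Sum.elim (fun i => if f i = j then some 2 else none)
      (Sum.elim (fun x => if f x.1 = j then some 1 else none)
        fun j' => if j' = j then some 0 else none))]
  · rw [Fintype.sum_sum_type, Fintype.sum_sum_type, Fintype.sum_sigma]
    rcases k with _ | _ | _ | k <;> simp [← Finset.sum_filter, hcard, hsum]
  · rintro (i' | x | j) <;> grind
  · intro u w k hadj
    obtain ⟨x, ⟨rfl, rfl | rfl⟩ | ⟨rfl, rfl | rfl⟩⟩ := (spiderForest_adj_iff u w).mp hadj <;>
      simp <;> grind
  · rintro (i' | x | j') k hk
    · refine ⟨.inr (.inl ⟨i', 0, hpos i'⟩), ?_⟩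
      simp [spiderForest] at hk ⊢
      grind
    · refine ⟨.inr (.inr j), ?_⟩
      simp [spiderForest] at hk ⊢
      grind
    · simp at hk

end spiderForest

/-- Let `m ≥ 1` and `a_1 ≥ a_2 ≥ ⋯ ≥ a_{3m}` be natural numbers with `Σ a_i = m·t`,
`t ≥ 4`, `4·a_i > t` and `2·a_i < t` for all `i`, `a_{3m} ≥ 3`, and
`a_i - a_{i+1} ≥ 3` for all `i`. Then the instance `a` admits a three-partition into
`m` disjoint triples each of sum `t` if and only if there is a simple graph on
`n = 4m + m·t = (t+4)·m` vertices whose distance-count matrix equals `M(a)` up to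
permutation of rows, i.e. whose multiset of rows is the prescribed one. -/
theorem threePartition_iff_DCM (m t : ℕ) (hm : 1 ≤ m) (a : Fin (3 * m) → ℕ)
    (hanti : ∀ i j : Fin (3 * m), i ≤ j → a j ≤ a i)
    (hsum : ∑ i, a i = m * t) (ht : 4 ≤ t)
    (hlb : ∀ i, t < 4 * a i) (hub : ∀ i, 2 * a i < t)
    (hlast : 3 ≤ a ⟨3 * m - 1, by omega⟩)
    (hgap : ∀ i : ℕ, (h : i + 1 < 3 * m) → a ⟨i + 1, h⟩ + 3 ≤ a ⟨i, by omega⟩) :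
    HasThreePartition m t a ↔
      ∃ G : SimpleGraph (Fin (4 * m + m * t)),
        dcmRows G (4 * m + m * t) = targetRows m t a := by
  have hpos : ∀ i, 0 < a i := fun i => by
    have := hlb i
    omega
  constructor
  · intro h
    obtain ⟨f, hcard, hfsum⟩ := h.exists_fibers
    have hK : Fintype.card (Σ i, Fin (a i)) = m * t := by simp [hsum]
    have hV : Fintype.card (Fin (4 * m + m * t)) =
        Fintype.card (Fin (3 * m) ⊕ (Σ i, Fin (a i)) ⊕ Fin m) := by
      rw [Fintype.card_sum, Fintype.card_sum, hK]
      simp only [Fintype.card_fin]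
      omega
    obtain ⟨e⟩ := Fintype.card_eq.mp hV
    refine ⟨(spiderForest a f).comap e, ?_⟩
    have hrow : ∀ w, (fun k : Fin (4 * m + m * t) => nCount (spiderForest a f) k w) =
        rowFamily m t a _ w := by
      rintro (i | x | j) <;> funext k
      · exact nCount_spiderForest_inl hpos hcard hfsum k i
      · exact nCount_spiderForest_mid hpos hcard hfsum k x
      · exact nCount_spiderForest_inr hpos hcard hfsum k j
    rw [← map_rowFamily_univ m t a _ hK, ← Multiset.map_univ_val_equiv e, Multiset.map_map,
      dcmRows]
    refine Multiset.map_congr rfl fun v _ => ?_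
    rw [Function.comp_apply, ← hrow]
    funext k
    exact ((SimpleGraph.Iso.comap e (spiderForest a f)).nCount_eq k v).symm
  · rintro ⟨G, hG⟩
    rw [← map_rowFamily_univ m t a (Fin (m * t)) (by simp), dcmRows] at hG
    obtain ⟨e, he⟩ := Fintype.exists_equiv_of_map_univ_eq _ _ hG.symm
    have hrow : ∀ w (k : ℕ) (hk : k < 4 * m + m * t),
        nCount G k (e w) = rowFamily m t a _ w ⟨k, hk⟩ := fun w k hk => congrFun (he w) ⟨k, hk⟩
    have hlen : 3 < 4 * m + m * t := by omega
    refine hasThreePartition_of_nCount G hsum ht hub (fun i => e (.inl i))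
      (fun j => e (.inr (.inr j))) (e.injective.comp Sum.inl_injective)
      (fun i => hrow _ 1 (by omega)) (fun i => hrow _ 2 (by omega)) (fun i => hrow _ 3 hlen)
      (fun j => hrow _ 1 (by omega)) (fun j => hrow _ 2 (by omega)) ?_
    intro v hv hv'
    obtain ⟨w, rfl⟩ := e.surjective v
    rw [hrow w 1 (by omega)] at hv hv'
    rcases w with i | x | j
    · have := hub i
      simp [rowFamily, rowI] at hv
      omega
    · simp [rowFamily, rowII] at hv'
    · exact ⟨j, rfl⟩
end
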